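/- arXiv:math/0612493 — 6 statements merged into one kernel-verified Lean document; each statement's English description precedes it below -/
import Mathlib

section
/- Let k be a field and V a k-vector space. Let r ∈ End(V ⊗ V) be skew, i.e. r = −r^{21}. Then r satisfies the cyclic identity r^{12}r^{23} + r^{23}r^{31} + r^{31}r^{12} = 0 in End(V^{⊗3}) (which is the double Jacobi identity for the associated double bracket) if and only if r satisfies the associative Yang–Baxter equation AYBE(r) := r^{12}r^{13} − r^{23}r^{12} + r^{13}r^{23} = 0. -/
/- STATEMENT 1: For a skew `r ∈ End(V ⊗ V)`, the cyclic (double Jacobi) identity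
`r¹²r²³ + r²³r³¹ + r³¹r¹² = 0` holds iff the associative Yang–Baxter equation
`AYBE(r) = r¹²r¹³ − r²³r¹² + r¹³r²³ = 0` holds. -/

open TensorProduct

noncomputable section

variable (k : Type*) [Field k] (V : Type*) [AddCommGroup V] [Module k V]

/-- The flip of `V ⊗ V`. -/
def flip2 : V ⊗[k] V →ₗ[k] V ⊗[k] V := (TensorProduct.comm k V V).toLinearMap

/-- `r²¹ = τ ∘ r ∘ τ`. -/
def r21 (r : V ⊗[k] V →ₗ[k] V ⊗[k] V) : V ⊗[k] V →ₗ[k] V ⊗[k] V :=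
  flip2 k V ∘ₗ r ∘ₗ flip2 k V

/-- The associator `(V ⊗ V) ⊗ V ≃ V ⊗ (V ⊗ V)`. -/
def assoc3 : (V ⊗[k] V) ⊗[k] V ≃ₗ[k] V ⊗[k] (V ⊗[k] V) := TensorProduct.assoc k V V V

/-- `r¹²`, acting as `r` on the first two tensor factors of `V ⊗ (V ⊗ V)`. -/
def r12 (r : V ⊗[k] V →ₗ[k] V ⊗[k] V) : Module.End k (V ⊗[k] (V ⊗[k] V)) :=
  (assoc3 k V).toLinearMap ∘ₗ (LinearMap.rTensor V r) ∘ₗ (assoc3 k V).symm.toLinearMap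

/-- `r²³`, acting as `r` on the last two tensor factors of `V ⊗ (V ⊗ V)`. -/
def r23 (r : V ⊗[k] V →ₗ[k] V ⊗[k] V) : Module.End k (V ⊗[k] (V ⊗[k] V)) :=
  LinearMap.lTensor V r

/-- The flip of the second and third tensor factors of `V ⊗ (V ⊗ V)`. -/
def P23 : Module.End k (V ⊗[k] (V ⊗[k] V)) := LinearMap.lTensor V (flip2 k V)

/-- `r¹³`: first slot of `r` on factor 1, second slot on factor 3. -/
def r13 (r : V ⊗[k] V →ₗ[k] V ⊗[k] V) : Module.End k (V ⊗[k] (V ⊗[k] V)) :=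
  P23 k V ∘ₗ r12 k V r ∘ₗ P23 k V

/-- `r³¹ = (r²¹)¹³`: first slot of `r` on factor 3, second slot on factor 1. -/
def r31 (r : V ⊗[k] V →ₗ[k] V ⊗[k] V) : Module.End k (V ⊗[k] (V ⊗[k] V)) :=
  r13 k V (r21 k V r)

theorem P23_sq : P23 k V * P23 k V = 1 := by
  ext x y z
  simp [P23, flip2]

theorem r23_conj (r : V ⊗[k] V →ₗ[k] V ⊗[k] V) :
    r23 k V (r21 k V r) = P23 k V * r23 k V r * P23 k V := by
  simp only [r23, r21, P23, LinearMap.lTensor_comp]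
  rfl

theorem ring_key {R : Type*} [Ring R] (a b c P : R) (hP : P * P = 1)
    (h13 : c = P * a * P) (h23 : P * b * P = -b) :
    a * b + b * (-c) + (-c) * a = 0 ↔ a * c - b * a + c * b = 0 := by
  have hc : P * c * P = a := by
    rw [h13]
    calc P * (P * a * P) * P = (P * P) * a * (P * P) := by noncomm_ring
      _ = a := by rw [hP]; simp
  have conj : ∀ x y, P * (x * y) * P = (P * x * P) * (P * y * P) := fun x y => by
    calc P * (x * y) * P = P * x * 1 * y * P := by noncomm_ring
      _ = P * x * (P * P) * y * P := by rw [hP]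
      _ = _ := by noncomm_ring
  have key : P * (a * b + b * (-c) + (-c) * a) * P = -(a * c - b * a + c * b) := by
    calc P * (a * b + b * (-c) + (-c) * a) * P
        = P * (a * b) * P - P * (b * c) * P - P * (c * a) * P := by
          simp only [mul_neg, neg_mul, mul_add, add_mul, sub_eq_add_neg]
      _ = _ := by
        rw [conj, conj, conj, hc, h23, ← h13]
        simp only [mul_neg, neg_mul]
        abel
  constructor
  · intro h
    rw [h] at key
    rw [mul_zero, zero_mul] at key
    exact neg_eq_zero.mp key.symm
  · intro h
    rw [h] at key
    generalize a * b + b * (-c) + (-c) * a = X at *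
    calc X = (P * P) * X * (P * P) := by rw [hP]; simp
      _ = P * (P * X * P) * P := by noncomm_ring
      _ = 0 := by rw [key]; simp

theorem stmt_1 (r : V ⊗[k] V →ₗ[k] V ⊗[k] V) (hskew : r = - r21 k V r) :
    r12 k V r * r23 k V r + r23 k V r * r31 k V r + r31 k V r * r12 k V r = 0 ↔
      r12 k V r * r13 k V r - r23 k V r * r12 k V r + r13 k V r * r23 k V r = 0 := by
  have hP := P23_sq k V
  have h21 : r21 k V r = -r := by
    rw [eq_neg_iff_add_eq_zero, add_comm]
    exact eq_neg_iff_add_eq_zero.mp hskew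
  have h13 : r13 k V r = P23 k V * r12 k V r * P23 k V := rfl
  have h31 : r31 k V r = -r13 k V r := by
    unfold r31
    rw [h21]
    simp [r13, r12, LinearMap.rTensor_neg, LinearMap.comp_neg, LinearMap.neg_comp]
  have h23 : P23 k V * r23 k V r * P23 k V = -r23 k V r := by
    rw [← r23_conj, h21]
    simp [r23, LinearMap.lTensor_neg]
  rw [h31]
  exact ring_key _ _ _ _ hP h13 h23

end
end

section
/- Let k be a field, V a k-vector space, and r ∈ End(V ⊗ V) skew (r = −r^{21}). Then CYBE(r) = AYBE(r) − P₂₃ ∘ AYBE(r) ∘ P₂₃, where P₂₃ ∈ End(V^{⊗3}) is the operator flipping the second and third tensor factors. Consequently, every skew solution of the associative Yang–Baxter equation (AYBE(r) = 0) is also a solution of the classical Yang–Baxter equation (CYBE(r) = 0). -/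
/- STATEMENT 2: For skew `r`, `CYBE(r) = AYBE(r) − P₂₃ ∘ AYBE(r) ∘ P₂₃`; consequently
every skew solution of the AYBE is a solution of the CYBE. -/

open TensorProduct

noncomputable section

variable (k : Type*) [Field k] (V : Type*) [AddCommGroup V] [Module k V]

/-- `CYBE(r) = [r¹², r¹³] − [r²³, r¹²] + [r¹³, r²³]`. -/
def CYBE (r : V ⊗[k] V →ₗ[k] V ⊗[k] V) : Module.End k (V ⊗[k] (V ⊗[k] V)) :=
  (r12 k V r * r13 k V r - r13 k V r * r12 k V r)
    - (r23 k V r * r12 k V r - r12 k V r * r23 k V r)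
    + (r13 k V r * r23 k V r - r23 k V r * r13 k V r)

/-- `AYBE(r) = r¹²r¹³ − r²³r¹² + r¹³r²³`. -/
def AYBE (r : V ⊗[k] V →ₗ[k] V ⊗[k] V) : Module.End k (V ⊗[k] (V ⊗[k] V)) :=
  r12 k V r * r13 k V r - r23 k V r * r12 k V r + r13 k V r * r23 k V r

theorem ring_key_s2 {A : Type*} [Ring A] (P X R : A) (hPP : P * P = 1) (hR : P * R * P = -R) :
    (X * (P * X * P) - (P * X * P) * X) - (R * X - X * R) + ((P * X * P) * R - R * (P * X * P))
      = (X * (P * X * P) - R * X + (P * X * P) * R)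
        - P * (X * (P * X * P) - R * X + (P * X * P) * R) * P := by
  have hPP' : ∀ Z, P * (P * Z) = Z := fun Z => by rw [← mul_assoc, hPP, one_mul]
  have hPR : P * R = - (R * P) := by
    calc P * R = (P * R * P) * P := by rw [mul_assoc (P * R), hPP, mul_one]
      _ = _ := by rw [hR, neg_mul]
  have hPR' : ∀ Z, P * (R * Z) = - (R * (P * Z)) := fun Z => by
    rw [← mul_assoc, hPR, neg_mul, mul_assoc]
  simp only [mul_add, add_mul, mul_sub, sub_mul, mul_assoc, hPP, hPP', hPR, hPR', mul_neg,
    neg_mul, mul_one]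
  abel

theorem stmt_2 (r : V ⊗[k] V →ₗ[k] V ⊗[k] V) (hskew : r = - r21 k V r) :
    CYBE k V r = AYBE k V r - P23 k V * AYBE k V r * P23 k V ∧
      (AYBE k V r = 0 → CYBE k V r = 0) := by
  have hff : flip2 k V ∘ₗ flip2 k V = LinearMap.id := by
    ext x y
    simp [flip2]
  have hPP : P23 k V * P23 k V = 1 := by
    rw [P23, Module.End.mul_eq_comp, ← LinearMap.lTensor_comp, hff, LinearMap.lTensor_id]
    rfl
  have hR : P23 k V * r23 k V r * P23 k V = - r23 k V r := by
    have h : r23 k V r = - (P23 k V * r23 k V r * P23 k V) := by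
      conv_lhs => rw [r23, hskew, LinearMap.lTensor_neg]
      simp only [r21, P23, r23, Module.End.mul_eq_comp, LinearMap.lTensor_comp,
        LinearMap.comp_assoc]
    rw [eq_neg_iff_add_eq_zero, add_comm, ← eq_neg_iff_add_eq_zero]
    exact h
  have h13 : r13 k V r = P23 k V * r12 k V r * P23 k V := rfl
  have key : CYBE k V r = AYBE k V r - P23 k V * AYBE k V r * P23 k V := by
    unfold CYBE AYBE
    rw [h13]
    exact ring_key_s2 _ _ _ hPP hR
  refine ⟨key, fun h => ?_⟩
  rw [key, h]
  simp

end
end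

section
/- Let k be a field and A an associative unital k-algebra which is prime (for all nonzero a, b ∈ A there exists c ∈ A with acb ≠ 0) and noncommutative. If x ∈ A ⊗ A ⊗ A satisfies (a⊗1⊗1)·x = (1⊗1⊗a)·x for all a ∈ A (multiplication in the algebra A^{⊗3}), then x = 0. -/
/- STATEMENT 6: If `A` is prime and noncommutative and `x ∈ A ⊗ A ⊗ A` satisfies
`(a⊗1⊗1)·x = (1⊗1⊗a)·x` for all `a ∈ A`, then `x = 0`. -/

open TensorProduct

theorem stmt_6 (k : Type*) [Field k] (A : Type*) [Ring A] [Algebra k A]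
    (hprime : ∀ a b : A, a ≠ 0 → b ≠ 0 → ∃ c : A, a * c * b ≠ 0)
    (hnoncomm : ∃ u v : A, u * v ≠ v * u)
    (x : A ⊗[k] (A ⊗[k] A))
    (hx : ∀ a : A,
      (a ⊗ₜ[k] ((1 : A) ⊗ₜ[k] (1 : A))) * x = ((1 : A) ⊗ₜ[k] ((1 : A) ⊗ₜ[k] a)) * x) :
    x = 0 := by
  classical
  obtain ⟨u, v, huv⟩ := hnoncomm
  let L : A → A ⊗[k] (A ⊗[k] A) := fun a => a ⊗ₜ[k] ((1 : A) ⊗ₜ[k] (1 : A))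
  let R : A → A ⊗[k] (A ⊗[k] A) := fun a => (1 : A) ⊗ₜ[k] ((1 : A) ⊗ₜ[k] a)
  have hL : ∀ a b, L (a * b) = L a * L b := fun a b => by simp [L]
  have hR : ∀ a b, R (a * b) = R a * R b := fun a b => by simp [R]
  have hLR : ∀ a b, L a * R b = R b * L a := fun a b => by simp [L, R]
  have hx' : ∀ a, L a * x = R a * x := hx
  have h1 : ∀ a b, R (a * b) * x = R (b * a) * x := fun a b => by
    rw [← hx', hL, mul_assoc, hx', ← mul_assoc, hLR, mul_assoc, hx', ← mul_assoc, ← hR]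
  have h2 : ∀ c, R (u * v * c) * x = R (v * u * c) * x := fun c => by
    rw [hR, hR (v * u), mul_assoc, mul_assoc, ← hx', ← mul_assoc, ← mul_assoc, ← hLR, ← hLR,
      mul_assoc, mul_assoc, h1]
  let b := Module.Basis.ofVectorSpace k (A ⊗[k] A)
  let φ := (TensorProduct.assoc k A A A).symm.trans
    (TensorProduct.equivFinsuppOfBasisLeft (N := A) b)
  have hφ : ∀ (a : A) (y) (i), φ (R a * y) i = a * φ y i := by
    intro a y i
    induction y using TensorProduct.induction_on with
    | zero => simp
    | add y z hy hz => simp [mul_add, hy, hz]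
    | tmul p q =>
      induction q using TensorProduct.induction_on with
      | zero => simp
      | add y z hy hz => simp [mul_add, TensorProduct.tmul_add, hy, hz]
      | tmul q r => simp [φ, R]
  have h3 : ∀ i, φ x i = 0 := by
    intro i
    by_contra h
    obtain ⟨c, hc⟩ := hprime (u * v - v * u) (φ x i) (sub_ne_zero.mpr huv) h
    apply hc
    rw [sub_mul, sub_mul, ← hφ, ← hφ, h2, sub_self]
  apply φ.injective
  rw [map_zero]
  exact Finsupp.ext h3
end

section
/- Let k be a field, A a commutative associative unital k-algebra, and r : A ⊗ A → A ⊗ A a k-linear map which is skew (r(b⊗a) = −τ(r(a⊗b)) for all a,b, where τ is the flip of A ⊗ A) and satisfies the Leibniz rule r(a ⊗ bc) = (b⊗1)·r(a⊗c) + r(a⊗b)·(1⊗c) for all a,b,c ∈ A. Then for all a, b, c ∈ A: (a⊗1 − 1⊗a)·r(b⊗c) = (c⊗1 − 1⊗c)·r(b⊗a) = (b⊗1 − 1⊗b)·r(c⊗a) = (a⊗1 − 1⊗a)·r(c⊗b), where · denotes multiplication in the commutative algebra A ⊗ A. -/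
/- STATEMENT 10: For `A` commutative and `r : A ⊗ A → A ⊗ A` skew and satisfying the Leibniz
rule, for all `a,b,c`:
`(a⊗1 − 1⊗a)·r(b⊗c) = (c⊗1 − 1⊗c)·r(b⊗a) = (b⊗1 − 1⊗b)·r(c⊗a) = (a⊗1 − 1⊗a)·r(c⊗b)`. -/

open TensorProduct

theorem stmt_10 (k : Type*) [Field k] (A : Type*) [CommRing A] [Algebra k A]
    (r : A ⊗[k] A →ₗ[k] A ⊗[k] A)
    (hskew : ∀ a b : A, r (b ⊗ₜ[k] a) = - (TensorProduct.comm k A A) (r (a ⊗ₜ[k] b)))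
    (hleib : ∀ a b c : A,
      r (a ⊗ₜ[k] (b * c)) = (b ⊗ₜ[k] (1 : A)) * r (a ⊗ₜ[k] c) + r (a ⊗ₜ[k] b) * ((1 : A) ⊗ₜ[k] c)) :
    ∀ a b c : A,
      (a ⊗ₜ[k] (1 : A) - (1 : A) ⊗ₜ[k] a) * r (b ⊗ₜ[k] c)
          = (c ⊗ₜ[k] (1 : A) - (1 : A) ⊗ₜ[k] c) * r (b ⊗ₜ[k] a) ∧
        (c ⊗ₜ[k] (1 : A) - (1 : A) ⊗ₜ[k] c) * r (b ⊗ₜ[k] a)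
          = (b ⊗ₜ[k] (1 : A) - (1 : A) ⊗ₜ[k] b) * r (c ⊗ₜ[k] a) ∧
        (b ⊗ₜ[k] (1 : A) - (1 : A) ⊗ₜ[k] b) * r (c ⊗ₜ[k] a)
          = (a ⊗ₜ[k] (1 : A) - (1 : A) ⊗ₜ[k] a) * r (c ⊗ₜ[k] b) := by
  have h1 : ∀ a b c : A, (a ⊗ₜ[k] (1 : A) - (1 : A) ⊗ₜ[k] a) * r (b ⊗ₜ[k] c)
      = (c ⊗ₜ[k] (1 : A) - (1 : A) ⊗ₜ[k] c) * r (b ⊗ₜ[k] a) := by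
    intro a b c
    have h := hleib b a c
    rw [mul_comm a c, hleib b c a] at h
    linear_combination -h
  have h2 : ∀ a b c : A, (c ⊗ₜ[k] (1 : A) - (1 : A) ⊗ₜ[k] c) * r (b ⊗ₜ[k] a)
      = (b ⊗ₜ[k] (1 : A) - (1 : A) ⊗ₜ[k] b) * r (c ⊗ₜ[k] a) := by
    intro a b c
    have e : ∀ x y : A, r (y ⊗ₜ[k] x) = -(Algebra.TensorProduct.comm k A A) (r (x ⊗ₜ[k] y)) :=
      fun x y => hskew x y
    have h := congrArg (Algebra.TensorProduct.comm k A A) (h1 c a b)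
    simp only [map_mul, map_sub, Algebra.TensorProduct.comm_tmul] at h
    rw [e a b, e a c]
    linear_combination h
  intro a b c
  exact ⟨h1 a b c, h2 a b c, h1 b c a⟩
end

section
/- Let k be a field, A a commutative associative unital k-algebra, and r : A ⊗ A → A ⊗ A a k-linear map which is skew (r(b⊗a) = −τ(r(a⊗b)) for all a,b, where τ is the flip of A ⊗ A) and satisfies the Leibniz rule r(a ⊗ bc) = (b⊗1)·r(a⊗c) + r(a⊗b)·(1⊗c) for all a,b,c ∈ A. Then for all a₁, a₂, b, c ∈ A: (a₁⊗1 − 1⊗a₁)·(a₂⊗1 − 1⊗a₂)·r(b⊗c) = (b⊗1 − 1⊗b)·(c⊗1 − 1⊗c)·r(a₁⊗a₂), where · denotes multiplication in the commutative algebra A ⊗ A. -/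
/- STATEMENT 11: For `A` commutative and `r : A ⊗ A → A ⊗ A` skew and satisfying the Leibniz
rule, for all `a₁,a₂,b,c`:
`(a₁⊗1 − 1⊗a₁)·(a₂⊗1 − 1⊗a₂)·r(b⊗c) = (b⊗1 − 1⊗b)·(c⊗1 − 1⊗c)·r(a₁⊗a₂)`. -/

open TensorProduct

theorem stmt_11 (k : Type*) [Field k] (A : Type*) [CommRing A] [Algebra k A]
    (r : A ⊗[k] A →ₗ[k] A ⊗[k] A)
    (hskew : ∀ a b : A, r (b ⊗ₜ[k] a) = - (TensorProduct.comm k A A) (r (a ⊗ₜ[k] b)))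
    (hleib : ∀ a b c : A,
      r (a ⊗ₜ[k] (b * c)) = (b ⊗ₜ[k] (1 : A)) * r (a ⊗ₜ[k] c) + r (a ⊗ₜ[k] b) * ((1 : A) ⊗ₜ[k] c)) :
    ∀ a₁ a₂ b c : A,
      (a₁ ⊗ₜ[k] (1 : A) - (1 : A) ⊗ₜ[k] a₁) * ((a₂ ⊗ₜ[k] (1 : A) - (1 : A) ⊗ₜ[k] a₂)
          * r (b ⊗ₜ[k] c))
        = (b ⊗ₜ[k] (1 : A) - (1 : A) ⊗ₜ[k] b) * ((c ⊗ₜ[k] (1 : A) - (1 : A) ⊗ₜ[k] c)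
          * r (a₁ ⊗ₜ[k] a₂)) := by
  have h1 : ∀ a b c : A, (b ⊗ₜ[k] (1 : A) - (1 : A) ⊗ₜ[k] b) * r (a ⊗ₜ[k] c)
      = (c ⊗ₜ[k] (1 : A) - (1 : A) ⊗ₜ[k] c) * r (a ⊗ₜ[k] b) := by
    intro a b c
    have e1 := hleib a b c
    have e2 := hleib a c b
    rw [mul_comm c b] at e2
    linear_combination e2 - e1
  have hs : ∀ a b : A, r (b ⊗ₜ[k] a)
      = - (Algebra.TensorProduct.comm k A A) (r (a ⊗ₜ[k] b)) := hskew
  have h2 : ∀ a b c : A, (b ⊗ₜ[k] (1 : A) - (1 : A) ⊗ₜ[k] b) * r (c ⊗ₜ[k] a)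
      = (c ⊗ₜ[k] (1 : A) - (1 : A) ⊗ₜ[k] c) * r (b ⊗ₜ[k] a) := by
    intro a b c
    have e := congrArg (Algebra.TensorProduct.comm k A A) (h1 a b c)
    simp only [map_mul, map_sub, Algebra.TensorProduct.comm_tmul] at e
    rw [hs a c, hs a b]
    linear_combination e
  intro a₁ a₂ b c
  linear_combination (a₁ ⊗ₜ[k] (1 : A) - (1 : A) ⊗ₜ[k] a₁) * h1 b a₂ c
    + (c ⊗ₜ[k] (1 : A) - (1 : A) ⊗ₜ[k] c) * h2 a₂ a₁ b
end

section
/- Let k be a field of characteristic zero, V a finite-dimensional k-vector space, and m ≥ 1. An endomorphism of V^{⊗m} commutes with the permutation action of S_m (permuting tensor factors) if and only if it lies in the k-linear span of the operators {g^{⊗m} : g ∈ GL(V)}. In other words, End_{S_m}(V^{⊗m}) = span_k{g^{⊗m} : g ∈ GL(V)} (classical Schur–Weyl duality). -/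
/- STATEMENT 18 (classical Schur–Weyl duality): for `V` finite-dimensional over a field of
characteristic zero, an endomorphism of `V^{⊗m}` commutes with the permutation action of
`S_m` iff it lies in the span of the operators `g^{⊗m}`, `g ∈ GL(V)`. -/

open TensorProduct PiTensorProduct

noncomputable section

variable (k : Type*) [Field k] (V : Type*) [AddCommGroup V] [Module k V]

/-- The permutation action of `σ ∈ S_m` on `V^{⊗m}`, sending
`v₁ ⊗ ⋯ ⊗ v_m` to `v_{σ⁻¹(1)} ⊗ ⋯ ⊗ v_{σ⁻¹(m)}`. -/
def permOp (m : ℕ) (σ : Equiv.Perm (Fin m)) : Module.End k (⨂[k]^m V) :=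
  (PiTensorProduct.reindex k (fun _ : Fin m => V) σ).toLinearMap

/-- The diagonal action `g^{⊗m}` of an invertible endomorphism `g` on `V^{⊗m}`. -/
def diagPow (m : ℕ) (g : V ≃ₗ[k] V) : Module.End k (⨂[k]^m V) :=
  PiTensorProduct.map (fun _ : Fin m => g.toLinearMap)

/-- A linear condition version of membership in a span. -/
theorem sw_mem_of_dual {K W : Type*} [Field K] [AddCommGroup W] [Module K W]
    (S : Submodule K W) (x : W)
    (h : ∀ φ : W →ₗ[K] K, (∀ s ∈ S, φ s = 0) → φ x = 0) : x ∈ S := by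
  by_contra hx
  obtain ⟨φ, hφ, hS⟩ := Submodule.exists_le_ker_of_notMem hx
  exact hφ (h φ (fun s hs => hS hs))

/-- Deforming an endomorphism to invertible ones. -/
theorem sw_diag_mem {K : Type*} [Field K] [CharZero K]
    {W : Type*} [AddCommGroup W] [Module K W] [FiniteDimensional K W]
    (m : ℕ) (A : Module.End K W) :
    PiTensorProduct.map (fun _ : Fin m => A) ∈ Submodule.span K
        {h : Module.End K (⨂[K]^m W) | ∃ g : W ≃ₗ[K] W, h = diagPow K W m g} := by
  classical
  apply sw_mem_of_dual
  intro φ hφ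
  let Φ := PiTensorProduct.mapMultilinear K (fun _ : Fin m => W) (fun _ : Fin m => W)
  let q : Polynomial K := ∑ s : Finset (Fin m),
    Polynomial.C (φ (Φ (s.piecewise (fun _ => A) (fun _ => 1)))) *
      Polynomial.X ^ (sᶜ).card
  have key : ∀ t : K, q.eval t = φ (Φ (fun _ => A + t • 1)) := by
    intro t
    have h1 : (fun _ : Fin m => A + t • (1 : Module.End K W))
        = (fun _ => A) + (fun _ => t • (1 : Module.End K W)) := rfl
    rw [h1, MultilinearMap.map_add_univ, map_sum, Polynomial.eval_finsetSum]
    refine Finset.sum_congr rfl fun s _ => ?_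
    have h2 : s.piecewise (fun _ : Fin m => A) (fun _ => t • (1 : Module.End K W))
        = fun i => (if i ∈ s then (1 : K) else t) •
          (s.piecewise (fun _ : Fin m => A) (fun _ => (1 : Module.End K W))) i := by
      funext i
      by_cases hi : i ∈ s <;> simp [hi]
    rw [h2, MultilinearMap.map_smul_univ, map_smul, Finset.prod_ite]
    have h3 : Finset.univ.filter (fun i => i ∉ s) = sᶜ := by ext i; simp
    rw [h3, Finset.prod_const_one, one_mul, Finset.prod_const, Polynomial.eval_mul,
      Polynomial.eval_C, Polynomial.eval_pow, Polynomial.eval_X, smul_eq_mul, mul_comm]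
  have hq : q = 0 := by
    apply Polynomial.eq_zero_of_infinite_isRoot
    have hfin : (spectrum K A).Finite := Module.End.finite_spectrum A
    have hfin2 : ((fun t : K => -t) ⁻¹' spectrum K A).Finite :=
      hfin.preimage (neg_injective.injOn)
    refine (hfin2.infinite_compl).mono ?_
    intro t ht
    have ht' : -t ∉ spectrum K A := ht
    rw [spectrum.notMem_iff] at ht'
    have hu : IsUnit (A + t • (1 : Module.End K W)) := by
      have := ht'.neg
      have h4 : -((algebraMap K (Module.End K W)) (-t) - A)
          = A + t • (1 : Module.End K W) := by
        rw [Algebra.algebraMap_eq_smul_one]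
        module
      rw [h4] at this
      exact this
    change q.eval t = 0
    rw [key]
    apply hφ
    apply Submodule.subset_span
    obtain ⟨u, hu⟩ := hu
    refine ⟨LinearMap.GeneralLinearGroup.generalLinearEquiv K W u, ?_⟩
    rw [← hu]
    rfl
  have h0 := key 0
  rw [hq] at h0
  simpa [Φ] using h0.symm

/-- Polarization. -/
theorem sw_polar_mem {K : Type*} [Field K] [CharZero K]
    {E F : Type*} [AddCommGroup E] [Module K E] [AddCommGroup F] [Module K F]
    (m : ℕ) (Φ : MultilinearMap K (fun _ : Fin m => E) F) (u : Fin m → E) :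
    ∑ σ : Equiv.Perm (Fin m), Φ (fun i => u (σ i)) ∈
      Submodule.span K (Set.range fun A : E => Φ (fun _ => A)) := by
  classical
  apply sw_mem_of_dual
  intro φ hφ
  let q : MvPolynomial (Fin m) K := ∑ r : Fin m → Fin m,
    MvPolynomial.monomial (∑ j, Finsupp.single (r j) 1) (φ (Φ (fun i => u (r i))))
  have hq : q = 0 := by
    apply MvPolynomial.funext
    intro t
    have h1 : φ (Φ (fun _ => ∑ i, t i • u i)) = 0 :=
      hφ _ (Submodule.subset_span ⟨_, rfl⟩)
    rw [map_zero, ← h1, MultilinearMap.map_sum, map_sum, map_sum]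
    refine Finset.sum_congr rfl fun r _ => ?_
    rw [MultilinearMap.map_smul_univ, map_smul, MvPolynomial.monomial_sum_index]
    simp [MvPolynomial.eval_monomial, mul_comm]
  have hc : q.coeff (∑ j, Finsupp.single j 1) = 0 := by rw [hq]; simp
  rw [MvPolynomial.coeff_sum] at hc
  simp only [MvPolynomial.coeff_monomial] at hc
  rw [← hc, map_sum]
  refine Finset.sum_of_injOn (fun σ : Equiv.Perm (Fin m) => (σ : Fin m → Fin m)) ?_ ?_ ?_ ?_
  · intro a _ b _ h
    exact DFunLike.coe_injective h
  · intro a _; simp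
  · intro r _ hr
    rw [if_neg]
    intro h
    apply hr
    have hs : Function.Surjective r := by
      intro i
      by_contra hi
      push Not at hi
      have := DFunLike.congr_fun h i
      simp [Finsupp.finsetSum_apply, Finsupp.single_apply, hi] at this
    exact ⟨Equiv.ofBijective r (Finite.surjective_iff_bijective.mp hs), by simp, rfl⟩
  · intro σ _
    rw [if_pos]
    exact Equiv.sum_comp σ (fun j => Finsupp.single j 1)

/-- Elementary tensors span the endomorphisms. -/
theorem sw_span_map {K : Type*} [Field K]
    {W : Type*} [AddCommGroup W] [Module K W] [FiniteDimensional K W]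
    (m : ℕ) (f : Module.End K (⨂[K]^m W)) :
    f ∈ Submodule.span K (Set.range fun u : Fin m → Module.End K W =>
      (PiTensorProduct.map u : Module.End K (⨂[K]^m W))) := by
  classical
  let b := Module.finBasis K W
  let B : Module.Basis (Fin m → Fin (Module.finrank K W)) K (⨂[K]^m W) :=
    Basis.piTensorProduct (fun _ : Fin m => b)
  have hf : f = ∑ p, ∑ q, (B.repr (f (B p)) q) •
      (PiTensorProduct.map (fun i : Fin m => (b.coord (p i)).smulRight (b (q i))) :
        Module.End K (⨂[K]^m W)) := by
    apply B.ext
    intro p'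
    have hmap : ∀ p q : Fin m → Fin (Module.finrank K W),
        (PiTensorProduct.map (fun i : Fin m => (b.coord (p i)).smulRight (b (q i))) :
        Module.End K (⨂[K]^m W)) (B p') = if p = p' then B q else 0 := by
      intro p q
      have h1 : ∀ q, B q = PiTensorProduct.tprod K (fun i => b (q i)) := fun q =>
        Basis.piTensorProduct_apply _ _
      rw [h1, h1, PiTensorProduct.map_tprod]
      simp only [LinearMap.smulRight_apply]
      rw [MultilinearMap.map_smul_univ]
      split_ifs with h
      · subst h; simp
      · obtain ⟨i, hi⟩ := Function.ne_iff.mp h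
        rw [Finset.prod_eq_zero (Finset.mem_univ i), zero_smul]
        simp [Finsupp.single_apply, Ne.symm hi]
    simp only [LinearMap.sum_apply, LinearMap.smul_apply, hmap]
    rw [Finset.sum_eq_single p']
    · simp [B.sum_repr]
    · intro p _ hp
      simp [hp]
    · simp
  rw [hf]
  exact Submodule.sum_mem _ fun p _ => Submodule.sum_mem _ fun q _ =>
    Submodule.smul_mem _ _ (Submodule.subset_span ⟨_, rfl⟩)

theorem sw_perm_tprod {K : Type*} [Field K]
    {W : Type*} [AddCommGroup W] [Module K W]
    (m : ℕ) (σ : Equiv.Perm (Fin m)) (v : Fin m → W) :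
    permOp K W m σ (PiTensorProduct.tprod K v)
      = PiTensorProduct.tprod K (fun i => v (σ.symm i)) :=
  PiTensorProduct.reindex_tprod (s := fun _ : Fin m => W) σ v

/-- Conjugating an elementary tensor of operators. -/
theorem sw_conj {K : Type*} [Field K]
    {W : Type*} [AddCommGroup W] [Module K W]
    (m : ℕ) (u : Fin m → Module.End K W) (σ : Equiv.Perm (Fin m)) :
    permOp K W m σ⁻¹ * (PiTensorProduct.map u : Module.End K (⨂[K]^m W)) * permOp K W m σ
      = PiTensorProduct.map (fun i => u (σ i)) := by
  apply PiTensorProduct.ext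
  ext v
  simp only [LinearMap.compMultilinearMap_apply, Module.End.mul_apply]
  rw [sw_perm_tprod, PiTensorProduct.map_tprod, sw_perm_tprod, PiTensorProduct.map_tprod]
  congr 1
  funext i
  change (u (σ i)) (v (σ.symm (σ i))) = (u (σ i)) (v i)
  rw [Equiv.symm_apply_apply]

theorem sw_inv {K : Type*} [Field K]
    {W : Type*} [AddCommGroup W] [Module K W]
    (m : ℕ) (σ : Equiv.Perm (Fin m)) : permOp K W m σ⁻¹ * permOp K W m σ = 1 := by
  have := sw_conj (K := K) (W := W) m (fun _ => 1) σ
  rw [PiTensorProduct.map_one] at this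
  simpa using this

theorem stmt_18 (k : Type*) [Field k] [CharZero k]
    (V : Type*) [AddCommGroup V] [Module k V] [FiniteDimensional k V]
    (m : ℕ) (hm : 1 ≤ m) (f : Module.End k (⨂[k]^m V)) :
    (∀ σ : Equiv.Perm (Fin m), f * permOp k V m σ = permOp k V m σ * f) ↔
      f ∈ Submodule.span k
        {h : Module.End k (⨂[k]^m V) | ∃ g : V ≃ₗ[k] V, h = diagPow k V m g} := by
  classical
  constructor
  · intro hf
    -- averaging operator
    let T : Module.End k (⨂[k]^m V) →ₗ[k] Module.End k (⨂[k]^m V) :=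
      ∑ σ : Equiv.Perm (Fin m),
        LinearMap.mulRight k (permOp k V m σ) ∘ₗ LinearMap.mulLeft k (permOp k V m σ⁻¹)
    have hT : ∀ x, T x = ∑ σ : Equiv.Perm (Fin m),
        permOp k V m σ⁻¹ * x * permOp k V m σ := by
      intro x
      simp [T, LinearMap.sum_apply]
    have hTf : T f = (Nat.factorial m : k) • f := by
      rw [hT]
      have : ∀ σ : Equiv.Perm (Fin m), permOp k V m σ⁻¹ * f * permOp k V m σ = f := by
        intro σ
        rw [mul_assoc, hf, ← mul_assoc, sw_inv, one_mul]
      simp [this, Fintype.card_perm, Nat.cast_smul_eq_nsmul]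
    have hmem : ∀ x, T x ∈ Submodule.span k
        {h : Module.End k (⨂[k]^m V) | ∃ g : V ≃ₗ[k] V, h = diagPow k V m g} := by
      intro x
      induction sw_span_map m x using Submodule.span_induction with
      | mem x hx =>
        obtain ⟨u, rfl⟩ := hx
        rw [hT]
        simp only [sw_conj]
        have h1 := sw_polar_mem m
          (PiTensorProduct.mapMultilinear k (fun _ : Fin m => V) (fun _ : Fin m => V)) u
        refine (Submodule.span_le.mpr ?_) h1
        rintro _ ⟨A, rfl⟩
        exact sw_diag_mem m A
      | zero => rw [map_zero]; exact Submodule.zero_mem _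
      | add x y _ _ hx hy => rw [map_add]; exact Submodule.add_mem _ hx hy
      | smul a x _ hx => rw [map_smul]; exact Submodule.smul_mem _ _ hx
    have h0 : (Nat.factorial m : k) ≠ 0 := Nat.cast_ne_zero.mpr (Nat.factorial_ne_zero m)
    have h2 := hmem f
    rw [hTf] at h2
    exact (Submodule.smul_mem_iff _ h0).mp h2
  · intro hf σ
    induction hf using Submodule.span_induction with
    | mem x hx =>
      obtain ⟨g, rfl⟩ := hx
      exact PiTensorProduct.map_comp_reindex_eq (fun _ : Fin m => g.toLinearMap) σ
    | zero => simp
    | add x y _ _ hx hy => rw [add_mul, mul_add, hx, hy]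
    | smul a x _ hx => rw [smul_mul_assoc, mul_smul_comm, hx]

end
end
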